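/- arXiv:2001.08079 — 2 statements merged into one kernel-verified Lean document; each statement's English description precedes it below -/
import Mathlib

section
/- For any prime p ≡ 3 (mod 4) and any positive integer m, the sum over k from 0 to mp-1 of ((1/2)_k)^3 / (k!)^3 is congruent to 0 modulo p^2 (i.e., this rational number has p-adic valuation at least 2). -/
open Finset

/-- The rising factorial (Pochhammer symbol) `(a)_k = a(a+1)⋯(a+k-1)` for `a : ℚ`. -/
def risingFactorial (a : ℚ) (k : ℕ) : ℚ := ∏ i ∈ Finset.range k, (a + i)

/-!
Write `c k = (1/2)_k / k!`, so that `c k = C(2k, k) / 4 ^ k`, and let `p = 2 n + 1` with `n` odd.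

The product `c (j + i) * ∏_{t=1}^{i+k} (2 j + 2 t)` equals `c j * N i k (2 j)` for a polynomial
`N i k`, so the sum of `c (j p + i) ^ 3` over the first half `i ≤ n` of a block of length `p` is, up
to a `p`-adic unit, a `p`-integral multiple of `T (2 j p)`, where `T y = ∑_{i+k=n} N i k y ^ 3`. In
the second half of a block each `c (j p + i)` is divisible by `p`.

It remains to see that `p ^ 2 ∣ T (p b)` for every integer `b`. Modulo `p ^ 2` this is an affine
function of `b`, so it is enough to treat `b = 0` and `b = -1`, which are exchanged by the
reflection `T (-y - p) = -T y`. At `y = 0`, the square `N i k 0 ^ 2` is congruent modulo `p ^ 2`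
to a constant times the `i`-th coefficient of the shifted Legendre polynomial `P_n`, while
`N i k 0` is a constant times `c i`. Hence `T 0` is congruent to a multiple of
`∑ (coeff i P_n) c i`, which is proportional to `∫ P_n (sin² x) dx` over `[0, π]`. This integral
vanishes because `P_n` is antisymmetric about `1/2` for odd `n`.
-/

/-- The ratio `(1/2)_k / k!`, whose cubes are summed. It is the mean value of `sin ^ (2 * k)`, as
in the Wallis product. -/
def wallisCoeff (k : ℕ) : ℚ := risingFactorial (1 / 2) k / k.factorial

lemma wallisCoeff_zero : wallisCoeff 0 = 1 := by simp [wallisCoeff, risingFactorial]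

lemma wallisCoeff_succ (k : ℕ) :
    wallisCoeff (k + 1) = wallisCoeff k * ((2 * k + 1) / (2 * k + 2)) := by
  simp only [wallisCoeff, risingFactorial, prod_range_succ, Nat.factorial_succ, Nat.cast_mul,
    Nat.cast_add_one]
  field_simp
  ring

lemma wallisCoeff_mul_four_pow (k : ℕ) : wallisCoeff k * 4 ^ k = k.centralBinom := by
  induction k with
  | zero => simp [wallisCoeff_zero]
  | succ k ih =>
    have recurrence : ((k : ℚ) + 1) * (k + 1).centralBinom = 2 * (2 * k + 1) * k.centralBinom :=
      mod_cast k.succ_mul_centralBinom_succ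
    rw [← ih] at recurrence
    rw [← mul_right_inj' k.cast_add_one_ne_zero, recurrence, wallisCoeff_succ]
    field_simp
    ring

section Legendre

open Polynomial Real

lemma integral_sin_sq_pow (k : ℕ) : ∫ x in 0..π, (sin x ^ 2) ^ k = π * wallisCoeff k := by
  have wallis_product : wallisCoeff k = ∏ i ∈ range k, ((2 * i + 1) / (2 * i + 2) : ℚ) := by
    induction k with
    | zero => simp [wallisCoeff_zero]
    | succ k ih => rw [prod_range_succ, ← ih, wallisCoeff_succ]
  simp only [← pow_mul, integral_sin_pow_even, wallis_product]
  push_cast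
  rfl

lemma integral_aeval_sin_sq (f : ℤ[X]) :
    ∫ x in 0..π, aeval (sin x ^ 2) f =
      π * ∑ k ∈ range (f.natDegree + 1), (f.coeff k * wallisCoeff k : ℝ) := by
  simp only [aeval_eq_sum_range, zsmul_eq_mul]
  rw [intervalIntegral.integral_finsetSum fun k _ ↦ by
    apply Continuous.intervalIntegrable; fun_prop, mul_sum]
  refine sum_congr rfl fun k _ ↦ ?_
  rw [intervalIntegral.integral_const_mul, integral_sin_sq_pow]
  ring

lemma integral_comp_one_sub_sin_sq (f : ℝ → ℝ) :
    ∫ x in 0..π, f (1 - sin x ^ 2) = ∫ x in 0..π, f (sin x ^ 2) := by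
  have periodic : Function.Periodic (fun x ↦ f (sin x ^ 2)) π := fun x ↦ by simp [sin_add_pi]
  calc ∫ x in 0..π, f (1 - sin x ^ 2)
      = ∫ x in 0..π, f (sin (x + π / 2) ^ 2) := by simp only [sin_add_pi_div_two, cos_sq']
    _ = ∫ x in π / 2..π / 2 + π, f (sin x ^ 2) := by
      rw [intervalIntegral.integral_comp_add_right fun x ↦ f (sin x ^ 2), zero_add, add_comm π]
    _ = ∫ x in 0..π, f (sin x ^ 2) := by
      rw [periodic.intervalIntegral_add_eq (π / 2) 0, zero_add]

lemma integral_shiftedLegendre_sin_sq {n : ℕ} (hn : Odd n) :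
    ∫ x in 0..π, aeval (sin x ^ 2) (shiftedLegendre n) = 0 := by
  have reflect := integral_comp_one_sub_sin_sq fun y ↦ aeval y (shiftedLegendre n)
  simp only [shiftedLegendre_eval_symm n (1 - _ : ℝ), hn.neg_one_pow, sub_sub_cancel, neg_one_mul,
    intervalIntegral.integral_neg] at reflect
  linarith

lemma sum_shiftedLegendre_coeff_mul_wallisCoeff {n : ℕ} (hn : Odd n) :
    ∑ k ∈ range (n + 1), (shiftedLegendre n).coeff k * wallisCoeff k = 0 := by
  have moments := integral_aeval_sin_sq (shiftedLegendre n)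
  rw [integral_shiftedLegendre_sin_sq hn, natDegree_shiftedLegendre, zero_eq_mul] at moments
  exact mod_cast moments.resolve_left pi_ne_zero

end Legendre

section ShiftedNumer

variable {R S : Type*} [CommRing R] [CommRing S]

/-- The numerator of `(1/2 + y/2)_i / (1 + y/2)_i` over the denominator
`(y + 2) (y + 4) ⋯ (y + 2 (i + k)) = shiftedNumer 0 (i + k) y`, common to all `i` with the same
`i + k`. Taking `k` rather than `i + k` as an argument avoids truncated subtraction. -/
def shiftedNumer (i k : ℕ) (y : R) : R :=
  (∏ t ∈ range i, (y + 2 * t + 1)) * ∏ t ∈ range k, (y + 2 * (i + k) - 2 * t)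

lemma map_shiftedNumer (φ : R →+* S) (i k : ℕ) (y : R) :
    φ (shiftedNumer i k y) = shiftedNumer i k (φ y) := by
  simp [shiftedNumer, map_ofNat]

lemma shiftedNumer_succ_left (i k : ℕ) (y : R) :
    shiftedNumer (i + 1) k y * (y + 2 * i + 2) = shiftedNumer i (k + 1) y * (y + 2 * i + 1) := by
  simp only [shiftedNumer, prod_range_succ]
  push_cast
  ring_nf

lemma shiftedNumer_reflect (i k : ℕ) (y : R) :
    shiftedNumer i k (-y - (2 * (i + k) + 1)) = (-1) ^ (i + k) * shiftedNumer k i y := by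
  have odd_factor (t : ℕ) :
      -y - (2 * (i + k) + 1) + 2 * t + 1 = -(y + 2 * (k + i) - 2 * t) := by ring
  have even_factor (t : ℕ) :
      -y - (2 * (i + k) + 1) + 2 * (i + k) - 2 * t = -(y + 2 * t + 1) := by ring
  simp only [shiftedNumer, odd_factor, even_factor, prod_neg, card_range]
  ring

lemma dvd_shiftedNumer {n i : ℕ} (hni : n < i) (k : ℕ) {y : R} (hy : 2 * (n : R) + 1 ∣ y) :
    2 * (n : R) + 1 ∣ shiftedNumer i k y := by
  refine Dvd.dvd.mul_right (dvd_trans ?_ (dvd_prod_of_mem _ (mem_range.mpr hni))) _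
  rw [add_assoc]
  exact hy.add dvd_rfl

/-- The numerator of `∑_{i ≤ n} ((1/2 + y/2)_i / (1 + y/2)_i) ^ 3` over the common denominator
`shiftedNumer 0 n y ^ 3`. -/
def cubeSum (n : ℕ) (y : R) : R :=
  ∑ ik ∈ antidiagonal n, shiftedNumer ik.1 ik.2 y ^ 3

lemma map_cubeSum (φ : R →+* S) (n : ℕ) (y : R) : φ (cubeSum n y) = cubeSum n (φ y) := by
  simp [cubeSum, map_shiftedNumer]

lemma cubeSum_reflect {n : ℕ} (hn : Odd n) (y : R) :
    cubeSum n (-y - (2 * n + 1)) = -cubeSum n y := by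
  rw [cubeSum, cubeSum, ← Nat.sum_antidiagonal_swap, ← sum_neg_distrib]
  refine sum_congr rfl fun ik hik ↦ ?_
  obtain rfl := mem_antidiagonal.mp hik
  have reflect := shiftedNumer_reflect ik.2 ik.1 y
  rw [add_comm ik.2, hn.neg_one_pow, ← Nat.cast_add, add_comm ik.2] at reflect
  rw [Prod.fst_swap, Prod.snd_swap, reflect]
  ring

end ShiftedNumer

section Factorial

lemma factorial_mul_prod_range_sub {R : Type*} [CommRing R] (i k : ℕ) :
    (i.factorial : R) * ∏ t ∈ range k, ((i : R) + k - t) = (i + k).factorial := by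
  induction k with
  | zero => simp
  | succ k ih =>
    rw [prod_range_succ', ← add_assoc, Nat.factorial_succ, Nat.cast_mul, ← ih]
    push_cast
    simp only [← add_assoc, add_sub_add_right_eq_sub, sub_zero]
    ring

lemma factorial_mul_prod_range_add {R : Type*} [CommSemiring R] (n i : ℕ) :
    (n.factorial : R) * ∏ t ∈ range i, ((n : R) + 1 + t) = (n + i).factorial := by
  rw [← Nat.factorial_mul_ascFactorial, Nat.ascFactorial_eq_prod_range]
  push_cast
  rfl

lemma factorial_mul_prod_range_odd_sq_sub_sq {R : Type*} [CommRing R] (i k : ℕ) :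
    (k.factorial : R) * ∏ t ∈ range i, ((2 * (t : R) + 1) ^ 2 - (2 * (i + k) + 1) ^ 2) =
      (-4) ^ i * (i + k + i).factorial := by
  have factor (t : ℕ) : (2 * (t : R) + 1) ^ 2 - (2 * (i + k) + 1) ^ 2 =
      -4 * (((k : R) + i - t) * (((i + k : ℕ) : R) + 1 + t)) := by
    push_cast
    ring
  simp only [factor, prod_mul_distrib, prod_const, card_range]
  rw [← factorial_mul_prod_range_add, add_comm i, ← factorial_mul_prod_range_sub (R := R) k i]
  ring

lemma factorial_mul_shiftedNumer_zero_left {R : Type*} [CommRing R] (i k : ℕ) :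
    (i.factorial : R) * shiftedNumer 0 k (2 * i : R) = 2 ^ k * (i + k).factorial := by
  simp only [shiftedNumer, range_zero, prod_empty, one_mul, Nat.cast_zero, zero_add, ← mul_add,
    ← mul_sub, prod_mul_distrib, prod_const, card_range]
  rw [← factorial_mul_prod_range_sub]
  ring

lemma factorial_mul_coeff_shiftedLegendre (i k : ℕ) :
    (i.factorial ^ 2 * k.factorial : ℤ) * (Polynomial.shiftedLegendre (i + k)).coeff i =
      (-1) ^ i * (i + k + i).factorial := by
  have choose_left : ((i + k).choose i * i.factorial * k.factorial : ℤ) = (i + k).factorial := by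
    rw [add_comm i k, mul_right_comm]
    exact mod_cast Nat.add_choose_mul_factorial_mul_factorial k i
  have choose_right : ((i + k + i).choose (i + k) * (i + k).factorial * i.factorial : ℤ) =
      (i + k + i).factorial := by
    rw [Nat.choose_symm_add]
    exact mod_cast Nat.add_choose_mul_factorial_mul_factorial (i + k) i
  rw [Polynomial.coeff_shiftedLegendre, ← choose_right, ← choose_left]
  ring

lemma prod_odd_sq_sub_sq_mul_shiftedNumer_sq (i k : ℕ) :
    (∏ t ∈ range i, ((2 * (t : ℤ) + 1) ^ 2 - (2 * (i + k) + 1) ^ 2)) *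
        shiftedNumer 0 k (2 * i : ℤ) ^ 2 =
      4 ^ (i + k) * (i + k).factorial ^ 2 * (Polynomial.shiftedLegendre (i + k)).coeff i := by
  have odd_part := factorial_mul_prod_range_odd_sq_sub_sq (R := ℤ) i k
  have even_part := factorial_mul_shiftedNumer_zero_left (R := ℤ) i k
  have h_ne : (i.factorial ^ 2 * k.factorial : ℤ) ≠ 0 := by positivity
  rw [← mul_right_inj' h_ne, mul_left_comm _ (4 ^ (i + k) * _),
    factorial_mul_coeff_shiftedLegendre]
  generalize ∏ t ∈ range i, ((2 * (t : ℤ) + 1) ^ 2 - (2 * (i + k) + 1) ^ 2) = A at *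
  generalize shiftedNumer 0 k (2 * i : ℤ) = B at *
  calc (i.factorial ^ 2 * k.factorial : ℤ) * (A * B ^ 2)
      = (k.factorial : ℤ) * A * ((i.factorial : ℤ) * B) ^ 2 := by ring
    _ = (-4 : ℤ) ^ i * (i + k + i).factorial * (2 ^ k * (i + k).factorial) ^ 2 := by
      rw [odd_part, even_part]
    _ = 4 ^ (i + k) * (i + k).factorial ^ 2 * ((-1) ^ i * (i + k + i).factorial) := by
      rw [neg_pow 4, mul_pow, ← pow_mul, mul_comm k, pow_mul, pow_add]
      ring

end Factorial

lemma wallisCoeff_add_mul_shiftedNumer (j i k : ℕ) :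
    wallisCoeff (j + i) * shiftedNumer 0 (i + k) (2 * j : ℚ) =
      wallisCoeff j * shiftedNumer i k (2 * j : ℚ) := by
  induction i generalizing k with
  | zero => simp
  | succ i ih =>
    have h_ne : (2 * j + 2 * i + 2 : ℚ) ≠ 0 := by positivity
    rw [← mul_left_inj' h_ne, mul_assoc (wallisCoeff j), shiftedNumer_succ_left, ← mul_assoc, ← ih,
      ← add_assoc j i, wallisCoeff_succ, add_right_comm i 1 k, add_assoc i k 1]
    push_cast
    field_simp

lemma sum_wallisCoeff_add_cube_mul (j n : ℕ) :
    (∑ i ∈ range (n + 1), wallisCoeff (j + i) ^ 3) * shiftedNumer 0 n (2 * j : ℚ) ^ 3 =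
      wallisCoeff j ^ 3 * cubeSum n (2 * j : ℚ) := by
  rw [cubeSum, mul_sum, sum_mul,
    ← Nat.sum_antidiagonal_eq_sum_range_succ_mk fun ik ↦ wallisCoeff (j + ik.1) ^ 3 * _]
  refine sum_congr rfl fun ik hik ↦ ?_
  obtain rfl := mem_antidiagonal.mp hik
  rw [← mul_pow, wallisCoeff_add_mul_shiftedNumer, mul_pow]

section ModSq

open Polynomial

lemma sq_dvd_eval_mul_of_sq_dvd_eval {R : Type*} [CommRing R] (f : R[X]) {a : R}
    (h_zero : a ^ 2 ∣ f.eval 0) (h_neg : a ^ 2 ∣ f.eval (-a)) (b : R) :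
    a ^ 2 ∣ f.eval (a * b) := by
  obtain ⟨u, hu⟩ := f.binomExpansion 0 (-a)
  obtain ⟨v, hv⟩ := f.binomExpansion 0 (a * b)
  rw [zero_add] at hu hv
  have h_deriv : a ^ 2 ∣ f.derivative.eval 0 * a := by
    obtain ⟨r, hr⟩ := h_zero
    obtain ⟨s, hs⟩ := h_neg
    exact ⟨r - s + u, by linear_combination hr - hs + hu⟩
  obtain ⟨r, hr⟩ := h_zero
  obtain ⟨s, hs⟩ := h_deriv
  exact ⟨r + s * b + v * b ^ 2, by linear_combination hv + hr + b * hs⟩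

lemma shiftedNumer_zero_sq_modEq (i k : ℕ) :
    shiftedNumer i k 0 ^ 2 ≡
      4 ^ (i + k) * (i + k).factorial ^ 2 * (shiftedLegendre (i + k)).coeff i
        [ZMOD (2 * (i + k) + 1) ^ 2] := by
  have split : shiftedNumer i k (0 : ℤ) =
      (∏ t ∈ range i, (2 * (t : ℤ) + 1)) * shiftedNumer 0 k (2 * i : ℤ) := by
    simp [shiftedNumer, mul_add]
  rw [← prod_odd_sq_sub_sq_mul_shiftedNumer_sq, split, mul_pow, ← prod_pow]
  exact (Int.ModEq.prod fun t _ ↦ Int.modEq_sub_modulus_iff.mpr rfl).mul_right _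

lemma sum_shiftedLegendre_coeff_mul_shiftedNumer_zero {n : ℕ} (hn : Odd n) :
    ∑ ik ∈ antidiagonal n, (shiftedLegendre n).coeff ik.1 * shiftedNumer ik.1 ik.2 (0 : ℤ) = 0 := by
  have numer_eq : ∀ ik ∈ antidiagonal n,
      ((shiftedNumer ik.1 ik.2 (0 : ℤ) : ℤ) : ℚ) = wallisCoeff ik.1 * shiftedNumer 0 n 0 := by
    rintro ⟨i, k⟩ hik
    obtain rfl := mem_antidiagonal.mp hik
    have := wallisCoeff_add_mul_shiftedNumer 0 i k
    rw [Nat.cast_zero, mul_zero, zero_add, wallisCoeff_zero, one_mul] at this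
    simpa [this] using map_shiftedNumer (Int.castRingHom ℚ) i k 0
  rw [← Int.cast_inj (α := ℚ), Int.cast_sum, Int.cast_zero]
  calc ∑ ik ∈ antidiagonal n,
        (((shiftedLegendre n).coeff ik.1 * shiftedNumer ik.1 ik.2 (0 : ℤ) : ℤ) : ℚ)
      = ∑ ik ∈ antidiagonal n,
        ((shiftedLegendre n).coeff ik.1 * wallisCoeff ik.1) * shiftedNumer 0 n 0 :=
        sum_congr rfl fun ik hik ↦ by rw [Int.cast_mul, numer_eq ik hik, mul_assoc]
    _ = 0 := by
      rw [← sum_mul, Nat.sum_antidiagonal_eq_sum_range_succ_mk,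
        sum_shiftedLegendre_coeff_mul_wallisCoeff hn, zero_mul]

lemma sq_dvd_cubeSum_zero {n : ℕ} (hn : Odd n) : (2 * n + 1 : ℤ) ^ 2 ∣ cubeSum n 0 := by
  rw [← Int.modEq_zero_iff_dvd]
  calc cubeSum n (0 : ℤ)
      ≡ ∑ ik ∈ antidiagonal n, 4 ^ n * n.factorial ^ 2 * (shiftedLegendre n).coeff ik.1 *
        shiftedNumer ik.1 ik.2 0 [ZMOD (2 * n + 1) ^ 2] := by
        refine Int.ModEq.sum fun ik hik ↦ ?_
        obtain rfl := mem_antidiagonal.mp hik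
        rw [pow_succ (shiftedNumer _ _ _), Nat.cast_add]
        exact (shiftedNumer_zero_sq_modEq ik.1 ik.2).mul_right _
    _ = 0 := by
        simp only [mul_assoc, ← mul_sum]
        rw [sum_shiftedLegendre_coeff_mul_shiftedNumer_zero hn, mul_zero, mul_zero]

lemma sq_dvd_cubeSum {n : ℕ} (hn : Odd n) {y : ℤ} (hy : (2 * n + 1 : ℤ) ∣ y) :
    (2 * n + 1 : ℤ) ^ 2 ∣ cubeSum n y := by
  obtain ⟨b, rfl⟩ := hy
  have eval_cubeSum (z : ℤ) : (cubeSum n (X : ℤ[X])).eval z = cubeSum n z := by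
    rw [← coe_evalRingHom, map_cubeSum, coe_evalRingHom, eval_X]
  rw [← eval_cubeSum]
  refine sq_dvd_eval_mul_of_sq_dvd_eval _ ?_ ?_ b <;> rw [eval_cubeSum]
  · exact sq_dvd_cubeSum_zero hn
  · rw [← zero_sub, ← neg_zero, cubeSum_reflect hn, dvd_neg]
    exact sq_dvd_cubeSum_zero hn

end ModSq

lemma exists_eq_mul_of_padicNorm_le {p : ℕ} [hp : Fact p.Prime] {q : ℚ} {n : ℕ}
    (hq : padicNorm p q ≤ (p : ℚ) ^ (-n : ℤ)) :
    ∃ a b : ℤ, ¬ (p : ℤ) ∣ b ∧ q * b = (p : ℚ) ^ n * a := by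
  have num_eq : q * (q.den : ℤ) = q.num := mod_cast q.mul_den_eq_num
  have norm_num_le : padicNorm p q.num ≤ padicNorm p (q.den : ℤ) * (p : ℚ) ^ (-n : ℤ) := by
    rw [← num_eq, padicNorm.mul, mul_comm]
    exact mul_le_mul_of_nonneg_left hq (padicNorm.nonneg _)
  have pow_le_one : (p : ℚ) ^ (-n : ℤ) ≤ 1 :=
    zpow_le_one_of_nonpos₀ (mod_cast hp.out.one_le) (by simp)
  obtain ⟨a, ha⟩ := padicNorm.dvd_iff_norm_le.mpr <| norm_num_le.trans <|
    mul_le_of_le_one_left (by positivity) (padicNorm.of_int _)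
  refine ⟨a, q.den, fun h_den ↦ ?_, by rw [num_eq, ha]; push_cast; rfl⟩
  have h_num : (p : ℤ) ∣ q.num := (padicNorm.int_lt_one_iff _).mp <|
    (norm_num_le.trans (mul_le_of_le_one_right (padicNorm.nonneg _) pow_le_one)).trans_lt
      ((padicNorm.int_lt_one_iff _).mpr h_den)
  exact Nat.not_coprime_of_dvd_of_dvd hp.out.one_lt (Int.natCast_dvd.mp h_num)
    (Int.natCast_dvd_natCast.mp h_den) q.reduced

section PadicNorm

variable {p : ℕ} [hp : Fact p.Prime]

lemma padicNorm_wallisCoeff_le_one (hp_odd : Odd p) (k : ℕ) :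
    padicNorm p (wallisCoeff k) ≤ 1 := by
  have norm_four_pow : padicNorm p ((4 ^ k : ℕ) : ℚ) = 1 :=
    (padicNorm.nat_eq_one_iff _).mpr <| hp.out.coprime_iff_not_dvd.mp <|
      (hp_odd.coprime_two_right.pow_right 2).pow_right k
  calc padicNorm p (wallisCoeff k)
      = padicNorm p (wallisCoeff k * (4 ^ k : ℕ)) := by
        rw [padicNorm.mul, norm_four_pow, mul_one]
    _ = padicNorm p k.centralBinom := by
        rw [Nat.cast_pow, Nat.cast_ofNat, wallisCoeff_mul_four_pow]
    _ ≤ 1 := padicNorm.of_nat _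

lemma padicNorm_shiftedNumer_zero_left (hp_odd : Odd p) {n : ℕ} (hn : n < p) (j : ℕ) :
    padicNorm p (shiftedNumer 0 n (2 * (j * p : ℕ) : ℚ)) = 1 := by
  have numer_eq : shiftedNumer 0 n (2 * (j * p : ℕ) : ℚ) =
      (∏ t ∈ range n, 2 * (j * p + (n - t)) : ℕ) := by
    rw [shiftedNumer, range_zero, prod_empty, one_mul, Nat.cast_prod]
    refine prod_congr rfl fun t ht ↦ ?_
    push_cast [(mem_range.mp ht).le]
    ring
  rw [numer_eq, padicNorm.nat_eq_one_iff, hp.out.prime.dvd_finsetProd_iff]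
  rintro ⟨t, ht, h_dvd⟩
  have ht := mem_range.mp ht
  rcases hp.out.dvd_mul.mp h_dvd with h_two | h_sum
  · exact hp.out.coprime_iff_not_dvd.mp hp_odd.coprime_two_right h_two
  · rw [Nat.dvd_add_right (dvd_mul_left p j)] at h_sum
    exact Nat.not_dvd_of_pos_of_lt (by lia) (by lia) h_sum

lemma padicNorm_wallisCoeff_mul_add_le {n : ℕ} (hpn : p = 2 * n + 1) {i : ℕ} (hni : n < i)
    (hip : i < p) (j : ℕ) : padicNorm p (wallisCoeff (j * p + i)) ≤ (p : ℚ) ^ (-1 : ℤ) := by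
  have hp_odd : Odd p := ⟨n, hpn⟩
  have p_cast : (p : ℤ) = 2 * n + 1 := mod_cast hpn
  have numer_cast : ((shiftedNumer i 0 (2 * (j * p : ℕ) : ℤ) : ℤ) : ℚ) =
      shiftedNumer i 0 (2 * (j * p : ℕ) : ℚ) := by
    simpa using map_shiftedNumer (Int.castRingHom ℚ) i 0 (2 * (j * p : ℕ))
  have dvd_numer : ((p ^ 1 : ℕ) : ℤ) ∣ shiftedNumer i 0 (2 * (j * p : ℕ) : ℤ) := by
    have dvd_arg : (p : ℤ) ∣ 2 * (j * p : ℕ) := mod_cast (dvd_mul_left p j).mul_left 2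
    rw [p_cast] at dvd_arg
    rw [pow_one, p_cast]
    exact dvd_shiftedNumer hni 0 dvd_arg
  have norm_eq := congrArg (padicNorm p) (wallisCoeff_add_mul_shiftedNumer (j * p) i 0)
  rw [padicNorm.mul, padicNorm.mul, add_zero, padicNorm_shiftedNumer_zero_left hp_odd hip, mul_one,
    ← numer_cast] at norm_eq
  rw [norm_eq]
  exact (mul_le_of_le_one_left (padicNorm.nonneg _) (padicNorm_wallisCoeff_le_one hp_odd _)).trans
    (padicNorm.dvd_iff_norm_le.mp dvd_numer)

lemma padicNorm_sum_lower_half_le {n : ℕ} (hpn : p = 2 * n + 1) (hn : Odd n) (j : ℕ) :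
    padicNorm p (∑ i ∈ range (n + 1), wallisCoeff (j * p + i) ^ 3) ≤ (p : ℚ) ^ (-2 : ℤ) := by
  have hp_odd : Odd p := ⟨n, hpn⟩
  have p_cast : (p : ℤ) = 2 * n + 1 := mod_cast hpn
  have cubeSum_cast : ((cubeSum n (2 * (j * p : ℕ) : ℤ) : ℤ) : ℚ) =
      cubeSum n (2 * (j * p : ℕ) : ℚ) := by
    simpa using map_cubeSum (Int.castRingHom ℚ) n (2 * (j * p : ℕ))
  have dvd_cubeSum : ((p ^ 2 : ℕ) : ℤ) ∣ cubeSum n (2 * (j * p : ℕ) : ℤ) := by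
    have dvd_arg : (p : ℤ) ∣ 2 * (j * p : ℕ) := mod_cast (dvd_mul_left p j).mul_left 2
    rw [p_cast] at dvd_arg
    rw [Nat.cast_pow, p_cast]
    exact sq_dvd_cubeSum hn dvd_arg
  have norm_eq := congrArg (padicNorm p) (sum_wallisCoeff_add_cube_mul (j * p) n)
  rw [padicNorm.mul, padicNorm.mul, IsAbsoluteValue.abv_pow (padicNorm p),
    IsAbsoluteValue.abv_pow (padicNorm p), padicNorm_shiftedNumer_zero_left hp_odd (by lia),
    one_pow, mul_one, ← cubeSum_cast] at norm_eq
  rw [norm_eq]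
  refine (mul_le_of_le_one_left (padicNorm.nonneg _) ?_).trans
    (padicNorm.dvd_iff_norm_le.mp dvd_cubeSum)
  exact pow_le_one₀ (padicNorm.nonneg _) (padicNorm_wallisCoeff_le_one hp_odd _)

lemma padicNorm_sum_block_le {n : ℕ} (hpn : p = 2 * n + 1) (hn : Odd n) (j : ℕ) :
    padicNorm p (∑ i ∈ range p, wallisCoeff (j * p + i) ^ 3) ≤ (p : ℚ) ^ (-2 : ℤ) := by
  rw [← sum_range_add_sum_Ico _ (show n + 1 ≤ p by lia)]
  refine padicNorm.nonarchimedean.trans (max_le (padicNorm_sum_lower_half_le hpn hn j) ?_)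
  refine padicNorm.sum_le' (fun i hi ↦ ?_) (by positivity)
  obtain ⟨hni, hip⟩ := mem_Ico.mp hi
  have p_ge_one : (1 : ℚ) ≤ p := mod_cast hp.out.one_le
  calc padicNorm p (wallisCoeff (j * p + i) ^ 3)
      = padicNorm p (wallisCoeff (j * p + i)) ^ 3 := IsAbsoluteValue.abv_pow (padicNorm p) _ _
    _ ≤ ((p : ℚ) ^ (-1 : ℤ)) ^ 3 := pow_le_pow_left₀ (padicNorm.nonneg _)
        (padicNorm_wallisCoeff_mul_add_le hpn hni hip j) 3
    _ = (p : ℚ) ^ (-3 : ℤ) := by rw [← zpow_natCast, ← zpow_mul]; rfl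
    _ ≤ (p : ℚ) ^ (-2 : ℤ) := zpow_le_zpow_right₀ p_ge_one (by norm_num)

lemma padicNorm_sum_wallisCoeff_cube_le {n : ℕ} (hpn : p = 2 * n + 1) (hn : Odd n) (m : ℕ) :
    padicNorm p (∑ k ∈ range (m * p), wallisCoeff k ^ 3) ≤ (p : ℚ) ^ (-2 : ℤ) := by
  induction m with
  | zero => simp
  | succ m ih =>
    rw [Nat.succ_mul, sum_range_add]
    exact padicNorm.nonarchimedean.trans (max_le ih (padicNorm_sum_block_le hpn hn m))

end PadicNorm

/-- For any prime `p ≡ 3 (mod 4)` and positive integer `m`,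
`∑_{k=0}^{mp-1} (1/2)_k^3 / k!^3 ≡ 0 (mod p^2)`. -/
theorem stmt2 (p m : ℕ) (hp : p.Prime) (h : p % 4 = 3) (hm : 0 < m) :
    ∃ a b : ℤ, ¬ ((p : ℤ) ∣ b) ∧
      (∑ k ∈ Finset.range (m * p),
          risingFactorial (1/2) k ^ 3 / (k.factorial : ℚ) ^ 3) * (b : ℚ)
        = (p : ℚ) ^ 2 * (a : ℚ) := by
  have : Fact p.Prime := ⟨hp⟩
  have hpn : p = 2 * (p / 2) + 1 := by lia
  have hn : Odd (p / 2) := ⟨p / 4, by lia⟩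
  simp only [← div_pow]
  exact exists_eq_mul_of_padicNorm_le (padicNorm_sum_wallisCoeff_cube_le hpn hn m)
end

section
/- Let m and n be positive integers with n ≡ 3 (mod 4). Then the square of the n-th cyclotomic polynomial Φ_n(q)^2 divides, in the ring of polynomials (after clearing denominators, or equivalently in the localization of ℤ[q] at Φ_n(q)), the sum over k from 0 to mn-1 of (1+q^{4k+1})(q^2;q^4)_k^3 / ((1+q)(q^4;q^4)_k^3) · q^k. -/
open Polynomial Finset

/-- The variable `q` as an element of the field of rational functions `ℚ(q)`. -/
noncomputable def Q : RatFunc ℚ := RatFunc.X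

/-- The q-shifted factorial `(a;b)_k = (1-a)(1-ab)⋯(1-ab^{k-1})` in `ℚ(q)`. -/
noncomputable def qPoch (a b : RatFunc ℚ) (k : ℕ) : RatFunc ℚ :=
  ∏ i ∈ Finset.range k, (1 - a * b ^ i)

/-! Measure everything with the `Φₙ(q)`-adic valuation and cut the sum into `m` blocks of length
`n`. Since `(q²; q⁴)ₗₙ / (q⁴; q⁴)ₗₙ` is a unit at `Φₙ(q)`, the `l`-th block is a unit times the sum
over `k < n` in which `q²` and `q⁴` are multiplied by `x = q⁴ˡⁿ`, which is `1` modulo `Φₙ(q)`.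
With `z = q²ⁿ`, replace the three equal parameters `x q²` by `x q² · x`, `x q² / (x z)` and
`x q² · z`, and the three denominator parameters `x q⁴` similarly: the perturbing factors are `1`
modulo `Φₙ(q)` and have product `1`, so the terms change only by multiples of `Φₙ(q)²`. The new sum
is a terminating `q`-Dixon sum, and two factors in the numerator of its product formula are
divisible by `Φₙ(q)`. -/

section QDixon

/-- The `q`-shifted factorial `(a; q)_k` over an arbitrary commutative ring. Over `ℚ(q)` it is
definitionally `qPoch`. -/
def qPochhammer {R : Type*} [CommRing R] (a q : R) (k : ℕ) : R :=
  ∏ i ∈ range k, (1 - a * q ^ i)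

section CommRing

variable {R : Type*} [CommRing R] (a q : R)

@[simp]
theorem qPochhammer_zero : qPochhammer a q 0 = 1 := prod_range_zero _

theorem qPochhammer_succ (k : ℕ) :
    qPochhammer a q (k + 1) = qPochhammer a q k * (1 - a * q ^ k) :=
  prod_range_succ _ _

theorem qPochhammer_add (k l : ℕ) :
    qPochhammer a q (k + l) = qPochhammer a q k * qPochhammer (a * q ^ k) q l := by
  simp only [qPochhammer, prod_range_add, pow_add, mul_assoc]

theorem qPochhammer_mul_one_sub (k : ℕ) :
    qPochhammer (a * q) q k * (1 - a) = qPochhammer a q k * (1 - a * q ^ k) := by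
  rw [← qPochhammer_succ, add_comm k, qPochhammer_add, qPochhammer_succ, qPochhammer_zero,
    pow_zero, pow_one, mul_one, one_mul, mul_comm]

variable {a q} in
theorem qPochhammer_eq_zero {i k : ℕ} (hik : i < k) (h : a * q ^ i = 1) :
    qPochhammer a q k = 0 :=
  prod_eq_zero (mem_range.2 hik) (by rw [h, sub_self])

end CommRing

variable {K : Type*} [Field K]

/-- The general term of the `q`-Dixon series
`∑ₖ (1 + d qᵏ) (d²; q)ₖ (b; q)ₖ (c; q)ₖ / ((q; q)ₖ (d² q / b; q)ₖ (d² q / c; q)ₖ) (d q / (b c))ᵏ`,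
without its factor `1 + d qᵏ`. The usual first parameter `a` is written `d²` to avoid `√a`. -/
def qDixonTerm (q b c d : K) (k : ℕ) : K :=
  qPochhammer (d ^ 2) q k * qPochhammer b q k * qPochhammer c q k /
    (qPochhammer q q k * qPochhammer (d ^ 2 * q / b) q k * qPochhammer (d ^ 2 * q / c) q k) *
    (d * q / (b * c)) ^ k

theorem qDixonTerm_zero (q b c d : K) : qDixonTerm q b c d 0 = 1 := by
  simp [qDixonTerm]

theorem qDixonTerm_eq_zero {q b : K} {i k : ℕ} (hik : i < k) (h : b * q ^ i = 1) (c d : K) :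
    qDixonTerm q b c d k = 0 := by
  simp [qDixonTerm, qPochhammer_eq_zero hik h]

variable {q b c d : K}

theorem qDixonTerm_succ_mul {k : ℕ} (hq : q ^ (k + 1) ≠ 1) (hb : d ^ 2 * q ^ (k + 1) / b ≠ 1)
    (hc : d ^ 2 * q ^ (k + 1) / c ≠ 1) :
    qDixonTerm q b c d (k + 1) *
        ((1 - q ^ (k + 1)) * (1 - d ^ 2 * q ^ (k + 1) / b) * (1 - d ^ 2 * q ^ (k + 1) / c)) =
      qDixonTerm q b c d k *
        ((1 - d ^ 2 * q ^ k) * (1 - b * q ^ k) * (1 - c * q ^ k) * (d * q / (b * c))) := by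
  have hden (x : K) : d ^ 2 * q / x * q ^ k = d ^ 2 * q ^ (k + 1) / x := by ring
  rw [ne_comm, ← sub_ne_zero] at hq hb hc
  rw [← eq_div_iff (mul_ne_zero (mul_ne_zero hq hb) hc)]
  simp only [qDixonTerm, qPochhammer_succ, hden, ← pow_succ', pow_succ (d * q / (b * c))]
  generalize 1 - q ^ (k + 1) = x, 1 - d ^ 2 * q ^ (k + 1) / b = y,
    1 - d ^ 2 * q ^ (k + 1) / c = z, d * q / (b * c) = w
  ring

theorem qDixonTerm_mul_left (hq : q ≠ 0) {k : ℕ} (hb : ∀ j ≤ k, d ^ 2 * q ^ j / b ≠ 1) :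
    qDixonTerm q (b * q) c d k * ((1 - b) * (1 - d ^ 2 / b) * q ^ k) =
      qDixonTerm q b c d k * ((1 - b * q ^ k) * (1 - d ^ 2 * q ^ k / b)) := by
  have hnum := qPochhammer_mul_one_sub b q k
  have hden := qPochhammer_mul_one_sub (d ^ 2 / b) q k
  have hne (l : ℕ) (hl : l ≤ k + 1) : qPochhammer (d ^ 2 / b) q l ≠ 0 :=
    prod_ne_zero_iff.2 fun j hj ↦ by
      rw [div_mul_eq_mul_div]
      exact sub_ne_zero.2 (hb j (by grind)).symm
  have hk := hne (k + 1) le_rfl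
  rw [qPochhammer_succ, ← hden] at hk
  have hinv : (1 - d ^ 2 / b) / qPochhammer (d ^ 2 / b) q k =
      (1 - d ^ 2 * q ^ k / b) / qPochhammer (d ^ 2 / b * q) q k := by
    rw [div_eq_div_iff (hne k (by omega)) (left_ne_zero_of_mul hk), mul_comm, hden]
    ring
  have hpow : (d * q / (b * q * c)) ^ k * q ^ k = (d * q / (b * c)) ^ k := by
    rw [← mul_pow]
    congr 1
    field_simp
  have harg : d ^ 2 * q / (b * q) = d ^ 2 / b := mul_div_mul_right _ _ hq
  have harg' : d ^ 2 * q / b = d ^ 2 / b * q := by ring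
  calc
    _ = qPochhammer (d ^ 2) q k * (qPochhammer (b * q) q k * (1 - b)) * qPochhammer c q k /
          (qPochhammer q q k * qPochhammer (d ^ 2 * q / c) q k) *
          ((1 - d ^ 2 / b) / qPochhammer (d ^ 2 / b) q k) *
          ((d * q / (b * q * c)) ^ k * q ^ k) := by
      rw [qDixonTerm, harg]
      ring
    _ = _ := by
      rw [hnum, hinv, hpow, qDixonTerm, harg']
      ring

variable (d) in
theorem sum_qDixonTerm_sub (hq : q ≠ 0) (hb : b ≠ 0) (hc : c ≠ 0) (k : ℕ)
    (hq' : ∀ j < k, q ^ (j + 1) ≠ 1) (hdb : ∀ j ≤ k, d ^ 2 * q ^ j / b ≠ 1)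
    (hdc : ∀ j < k, d ^ 2 * q ^ (j + 1) / c ≠ 1) :
    ∑ i ∈ range k, (1 + d * q ^ i) *
        ((1 - b) * (1 - d ^ 2 / (b * c)) * (1 - d / b) * qDixonTerm q b c d i -
          (1 - b) * (1 - d ^ 2 / b) * (1 - d / (b * c)) * qDixonTerm q (b * q) c d i) =
      qDixonTerm q b c d k *
        ((1 - q ^ k) * (1 - d ^ 2 * q ^ k / b) * (1 - d ^ 2 * q ^ k / c)) / q ^ k := by
  induction k with
  | zero => simp
  | succ k ih =>
    have hsucc := qDixonTerm_succ_mul (hq' k k.lt_succ_self) (hdb (k + 1) le_rfl)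
      (hdc k k.lt_succ_self)
    have hleft := qDixonTerm_mul_left (c := c) hq (fun j hj ↦ hdb j (hj.trans k.le_succ))
    rw [sum_range_succ, ih (fun j hj ↦ hq' j (hj.trans k.lt_succ_self))
      (fun j hj ↦ hdb j (hj.trans k.le_succ)) (fun j hj ↦ hdc j (hj.trans k.lt_succ_self)),
      hsucc]
    have hk : q ^ k ≠ 0 := pow_ne_zero k hq
    rw [← mul_assoc, ← eq_div_iff hk] at hleft
    generalize qDixonTerm q b c d k = t at *
    linear_combination (norm := (field_simp; ring))
      (-(1 + d * q ^ k) * (1 - d / (b * c))) * hleft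

theorem sum_qDixonTerm_mul_left (hq : q ≠ 0) (hb : b ≠ 0) (hc : c ≠ 0) {k : ℕ}
    (hq' : ∀ j < k, q ^ (j + 1) ≠ 1) (hdb : ∀ j ≤ k, d ^ 2 * q ^ j / b ≠ 1)
    (hdc : ∀ j < k, d ^ 2 * q ^ (j + 1) / c ≠ 1) (hk : qDixonTerm q b c d k = 0) :
    (1 - b) * (1 - d ^ 2 / b) * (1 - d / (b * c)) *
        ∑ i ∈ range k, (1 + d * q ^ i) * qDixonTerm q (b * q) c d i =
      (1 - b) * (1 - d ^ 2 / (b * c)) * (1 - d / b) *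
        ∑ i ∈ range k, (1 + d * q ^ i) * qDixonTerm q b c d i := by
  have htel := sum_qDixonTerm_sub d hq hb hc k hq' hdb hdc
  rw [hk, zero_mul, zero_div] at htel
  rw [eq_comm, ← sub_eq_zero, ← htel, mul_sum, mul_sum, ← sum_sub_distrib]
  exact sum_congr rfl fun i _ ↦ by ring

theorem sum_qDixonTerm_inv_pow_succ (hq : q ≠ 0) (hc : c ≠ 0) (hq' : ∀ j, q ^ (j + 1) ≠ 1)
    (hd : ∀ j, d ^ 2 * q ^ (j + 1) ≠ 1) (hdc : ∀ j, d ^ 2 * q ^ (j + 1) / c ≠ 1)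
    {N k : ℕ} (hN : N + 1 < k) :
    (1 - d ^ 2 * q * q ^ N) * (1 - d * q / c * q ^ N) *
        ∑ i ∈ range k, (1 + d * q ^ i) * qDixonTerm q (q ^ N)⁻¹ c d i =
      (1 - d ^ 2 * q / c * q ^ N) * (1 - d * q * q ^ N) *
        ∑ i ∈ range k, (1 + d * q ^ i) * qDixonTerm q (q ^ (N + 1))⁻¹ c d i := by
  have hqN : q ^ (N + 1) ≠ 0 := pow_ne_zero _ hq
  have hrec := sum_qDixonTerm_mul_left (d := d) hq (inv_ne_zero hqN) hc (fun j _ ↦ hq' j)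
    (fun j (_ : j ≤ k) ↦ by
      rw [div_inv_eq_mul, mul_assoc, ← pow_add, ← add_assoc]
      exact hd (j + N))
    (fun j _ ↦ hdc j) (qDixonTerm_eq_zero hN (inv_mul_cancel₀ hqN) c d)
  have hshift : (q ^ (N + 1))⁻¹ * q = (q ^ N)⁻¹ := by
    rw [pow_succ, mul_inv, inv_mul_cancel_right₀ hq]
  have hdiv (x : K) : x / (q ^ (N + 1))⁻¹ = x * q * q ^ N := by rw [div_inv_eq_mul]; ring
  have hdiv' (x : K) : x / ((q ^ (N + 1))⁻¹ * c) = x * q / c * q ^ N := by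
    rw [← div_div, hdiv, mul_div_right_comm]
  have hne : 1 - (q ^ (N + 1))⁻¹ ≠ 0 := by
    rw [sub_ne_zero, ne_comm, inv_ne_one]
    exact hq' N
  rw [hshift, hdiv, hdiv, hdiv', hdiv'] at hrec
  simpa only [mul_assoc, mul_right_inj' hne] using hrec

theorem sum_qDixonTerm_inv_pow (hq : q ≠ 0) (hc : c ≠ 0) (hq' : ∀ j, q ^ (j + 1) ≠ 1)
    (hd : ∀ j, d ^ 2 * q ^ (j + 1) ≠ 1) (hdc : ∀ j, d ^ 2 * q ^ (j + 1) / c ≠ 1)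
    {N k : ℕ} (hN : N < k) :
    ∑ i ∈ range k, (1 + d * q ^ i) * qDixonTerm q (q ^ N)⁻¹ c d i =
      (1 + d) * (qPochhammer (d ^ 2 * q) q N * qPochhammer (d * q / c) q N /
        (qPochhammer (d * q) q N * qPochhammer (d ^ 2 * q / c) q N)) := by
  induction N with
  | zero =>
    rw [sum_eq_single_of_mem 0 (mem_range.2 hN)]
    · simp [qDixonTerm_zero]
    · intro i _ hi
      rw [qDixonTerm_eq_zero (Nat.pos_of_ne_zero hi) (by simp), mul_zero]
  | succ N ih =>
    have hrec := sum_qDixonTerm_inv_pow_succ hq hc hq' hd hdc hN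
    have hd1 : 1 - d * q * q ^ N ≠ 0 := by
      rw [sub_ne_zero]
      refine fun h ↦ hd (N + (N + 1)) ?_
      calc d ^ 2 * q ^ (N + (N + 1) + 1) = (d * q * q ^ N) ^ 2 := by ring
        _ = 1 := by rw [← h, one_pow]
    have hdc1 : 1 - d ^ 2 * q / c * q ^ N ≠ 0 := by
      rw [sub_ne_zero, ne_comm]
      exact fun h ↦ hdc N (by rw [← h]; ring)
    rw [ih (by omega)] at hrec
    simp only [qPochhammer_succ]
    generalize 1 - d * q * q ^ N = x, 1 - d ^ 2 * q / c * q ^ N = y at *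
    rw [← mul_right_inj' (mul_ne_zero hdc1 hd1), ← hrec]
    field_simp

end QDixon

section Valuation

section CommRing

variable {R Γ : Type*} [CommRing R] [LinearOrderedCommMonoidWithZero Γ] {v : Valuation R Γ}
  {x y q : R} {ε : Γ}

theorem valuation_eq_one_of_one_sub_lt_one (hx : v (1 - x) < 1) : v x = 1 := by
  simpa only [sub_sub_cancel] using v.map_one_sub_of_lt hx

theorem valuation_one_sub_mul_eq_one (hx : v (1 - x) < 1) (hvy : v y ≤ 1)
    (hy : v (1 - y) = 1) : v (1 - x * y) = 1 := by
  rw [← hy]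
  refine v.map_eq_of_sub_lt ?_
  rw [show 1 - x * y - (1 - y) = (1 - x) * y by ring, map_mul, hy]
  exact (mul_le_of_le_one_right' hvy).trans_lt hx

theorem valuation_prod_sub_prod_le {ι : Type*} {s : Finset ι} {f g : ι → R}
    (hf : ∀ i ∈ s, v (f i) ≤ 1) (hg : ∀ i ∈ s, v (g i) ≤ 1)
    (h : ∀ i ∈ s, v (f i - g i) ≤ ε) : v (∏ i ∈ s, f i - ∏ i ∈ s, g i) ≤ ε := by
  classical
  induction s using Finset.induction_on with
  | empty => simp
  | insert a s ha ih =>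
    simp only [forall_mem_insert] at hf hg h
    rw [prod_insert ha, prod_insert ha,
      show f a * ∏ i ∈ s, f i - g a * ∏ i ∈ s, g i =
        (f a - g a) * ∏ i ∈ s, f i + g a * (∏ i ∈ s, f i - ∏ i ∈ s, g i) by ring]
    refine v.map_add_le ?_ ?_ <;> rw [map_mul]
    · refine (mul_le_of_le_one_right' ?_).trans h.1
      rw [map_prod]
      exact prod_le_one' hf.2
    · exact (mul_le_of_le_one_left' hg.1).trans (ih hf.2 hg.2 h.2)

theorem valuation_one_sub_mul_pow_le_one (hx : v x ≤ 1) (hq : v q ≤ 1) (i : ℕ) :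
    v (1 - x * q ^ i) ≤ 1 :=
  v.map_sub_le v.map_one.le
    (by rw [map_mul, map_pow]; exact mul_le_one' hx (pow_le_one' hq i))

theorem valuation_qPochhammer_le_one (hx : v x ≤ 1) (hq : v q ≤ 1) (k : ℕ) :
    v (qPochhammer x q k) ≤ 1 := by
  rw [qPochhammer, map_prod]
  exact prod_le_one' fun i _ ↦ valuation_one_sub_mul_pow_le_one hx hq i

theorem valuation_qPochhammer_le (hx : v x ≤ 1) (hq : v q ≤ 1) {i k : ℕ} (hik : i < k)
    (h : v (1 - x * q ^ i) ≤ ε) : v (qPochhammer x q k) ≤ ε := by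
  rw [qPochhammer, map_prod, ← mul_prod_erase _ _ (mem_range.2 hik)]
  exact (mul_le_of_le_one_right'
    (prod_le_one' fun j _ ↦ valuation_one_sub_mul_pow_le_one hx hq j)).trans h

theorem valuation_qPochhammer_eq_one {k : ℕ} (h : ∀ i < k, v (1 - x * q ^ i) = 1) :
    v (qPochhammer x q k) = 1 := by
  rw [qPochhammer, map_prod]
  exact prod_eq_one fun i hi ↦ h i (mem_range.1 hi)

end CommRing

variable {K Γ : Type*} [Field K] [LinearOrderedCommGroupWithZero Γ] {v : Valuation K Γ}
  {x y z q : K} {ε : Γ}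

theorem valuation_one_sub_div_le (hvy : v y = 1) (hx : v (1 - x) ≤ ε) (hy : v (1 - y) ≤ ε) :
    v (1 - x / y) ≤ ε := by
  have hy0 : y ≠ 0 := v.ne_zero_iff.1 (hvy ▸ one_ne_zero)
  rw [one_sub_div hy0, map_div₀, hvy, div_one, ← sub_sub_sub_cancel_left x y 1]
  exact v.map_sub_le hx hy

theorem valuation_div_sub_div_le {a a' b b' : K} (hε : ε < 1) (ha' : v a' ≤ 1) (hb' : v b' = 1)
    (h : v (a - a') ≤ ε) (h' : v (b - b') ≤ ε) : v (a / b - a' / b') ≤ ε := by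
  have hb : v b = 1 := hb' ▸ v.map_eq_of_sub_lt (h'.trans_lt (hε.trans_eq hb'.symm))
  have hb0 : b ≠ 0 := v.ne_zero_iff.1 (hb ▸ one_ne_zero)
  have hb0' : b' ≠ 0 := v.ne_zero_iff.1 (hb' ▸ one_ne_zero)
  rw [div_sub_div _ _ hb0 hb0',
    show a * b' - b * a' = (a - a') * b' - a' * (b - b') by ring,
    map_div₀, map_mul, hb, hb', mul_one, div_one]
  refine v.map_sub_le ?_ ?_ <;> rw [map_mul]
  · rwa [hb', mul_one]
  · exact (mul_le_of_le_one_left' ha').trans h'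

-- The three perturbing factors have product `1`, so the first-order terms cancel.
theorem valuation_one_sub_mul_sub_pow_le (hy : v y = 1) (hvx : v x = 1) (hvz : v z = 1)
    (hx : v (1 - x) ≤ ε) (hz : v (1 - z) ≤ ε) :
    v ((1 - y * x) * (1 - y / (x * z)) * (1 - y * z) - (1 - y) ^ 3) ≤ ε ^ 2 := by
  have hx0 : x ≠ 0 := v.ne_zero_iff.1 (hvx ▸ one_ne_zero)
  have hz0 : z ≠ 0 := v.ne_zero_iff.1 (hvz ▸ one_ne_zero)
  have hexpand : (1 - y * x) * (1 - y / (x * z)) * (1 - y * z) - (1 - y) ^ 3 =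
      (1 - x) * (1 - x) * (y ^ 2 / x - y / x) + (1 - z) * (1 - z) * (y ^ 2 / z - y / z) +
        (1 - x) * (1 - z) * (y ^ 2 - y / (x * z)) := by
    field_simp
    ring
  have hprod {a b c : K} (ha : v a ≤ ε) (hb : v b ≤ ε) (hc : v c ≤ 1) :
      v (a * b * c) ≤ ε ^ 2 := by
    rw [map_mul, map_mul, sq]
    exact (mul_le_of_le_one_right' hc).trans (mul_le_mul' ha hb)
  rw [hexpand]
  refine v.map_add_le (v.map_add_le (hprod hx hx ?_) (hprod hz hz ?_)) (hprod hx hz ?_) <;>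
    exact v.map_sub_le (by simp [hy, hvx, hvz]) (by simp [hy, hvx, hvz])

theorem valuation_qPochhammer_mul_sub_pow_le (hy : v y = 1) (hq : v q = 1) (hvx : v x = 1)
    (hvz : v z = 1) (hx : v (1 - x) ≤ ε) (hz : v (1 - z) ≤ ε) (k : ℕ) :
    v (qPochhammer (y * x) q k * qPochhammer (y / (x * z)) q k * qPochhammer (y * z) q k -
      qPochhammer y q k ^ 3) ≤ ε ^ 2 := by
  have hle {a : K} (ha : v a = 1) (i : ℕ) : v (1 - a * q ^ i) ≤ 1 :=
    valuation_one_sub_mul_pow_le_one ha.le hq.le i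
  simp only [qPochhammer, ← prod_mul_distrib, ← prod_pow]
  refine valuation_prod_sub_prod_le (fun i _ ↦ ?_) (fun i _ ↦ ?_) (fun i _ ↦ ?_)
  · rw [map_mul, map_mul]
    exact mul_le_one' (mul_le_one' (hle (by simp [hy, hvx]) i) (hle (by simp [hy, hvx, hvz]) i))
      (hle (by simp [hy, hvz]) i)
  · rw [map_pow]
    exact pow_le_one' (hle hy i) 3
  · rw [mul_right_comm y x, div_mul_eq_mul_div, mul_right_comm y z]
    exact valuation_one_sub_mul_sub_pow_le (by simp [hy, hq]) hvx hvz hx hz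

end Valuation

/-- The element `q` reduces to a primitive `n`-th root of unity in the residue field of the
valuation `v`, this residue field has characteristic zero, and `q` itself is not an `n`-th root of
unity. The model is the variable of `ℚ(q)` with the `Φₙ(q)`-adic valuation; everything is phrased
through valuations so that the residue field does not have to be constructed. -/
structure IsResiduePrimitiveRoot {K Γ : Type*} [Field K] [LinearOrderedCommGroupWithZero Γ]
    (v : Valuation K Γ) (q : K) (n : ℕ) : Prop where
  map_natCast : ∀ j : ℕ, j ≠ 0 → v j = 1
  pow_ne_one : q ^ n ≠ 1
  map_one_sub_pow_lt_one : v (1 - q ^ n) < 1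
  map_one_sub_pow_eq_one : ∀ e : ℕ, ¬ n ∣ e → v (1 - q ^ e) = 1

namespace IsResiduePrimitiveRoot

variable {K Γ : Type*} [Field K] [LinearOrderedCommGroupWithZero Γ] {v : Valuation K Γ} {q : K}
  {n : ℕ} (h : IsResiduePrimitiveRoot v q n)

include h

theorem pos : 0 < n := by
  refine Nat.pos_of_ne_zero ?_
  rintro rfl
  exact h.pow_ne_one (pow_zero q)

theorem map_self : v q = 1 := by
  have hqn := valuation_eq_one_of_one_sub_lt_one h.map_one_sub_pow_lt_one
  rwa [map_pow, pow_eq_one_iff_of_nonneg zero_le h.pos.ne'] at hqn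

theorem ne_zero : q ≠ 0 := v.ne_zero_iff.1 (h.map_self ▸ one_ne_zero)

theorem map_pow_eq_one (e : ℕ) : v (q ^ e) = 1 := by rw [map_pow, h.map_self, one_pow]

theorem map_one_sub_pow_of_dvd {e : ℕ} (he : n ∣ e) (he0 : e ≠ 0) :
    v (1 - q ^ e) = v (1 - q ^ n) := by
  obtain ⟨j, rfl⟩ := he
  have hj : v (j : K) = 1 := h.map_natCast j (right_ne_zero_of_mul he0)
  have hgeom : v (∑ i ∈ range j, (q ^ n) ^ i) = v (j : K) := by
    refine v.map_eq_of_sub_lt ?_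
    rw [hj, ← card_range j, cast_card, card_range, ← sum_sub_distrib]
    refine v.map_sum_lt one_ne_zero fun i _ ↦ ?_
    rw [v.map_sub_swap, ← mul_neg_geom_sum, map_mul]
    refine (mul_le_of_le_one_right' (v.map_sum_le fun l _ ↦ ?_)).trans_lt
      h.map_one_sub_pow_lt_one
    rw [← pow_mul, h.map_pow_eq_one]
  rw [pow_mul, ← mul_neg_geom_sum, map_mul, hgeom, hj, mul_one]

theorem map_one_sub_pow_le {e : ℕ} (he : n ∣ e) : v (1 - q ^ e) ≤ v (1 - q ^ n) := by
  rcases eq_or_ne e 0 with rfl | he0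
  · simp
  · exact (h.map_one_sub_pow_of_dvd he he0).le

theorem pow_eq_one_iff {e : ℕ} : q ^ e = 1 ↔ e = 0 := by
  refine ⟨fun he ↦ by_contra fun he0 ↦ ?_, fun he ↦ he ▸ pow_zero q⟩
  have hv : v (1 - q ^ e) = 0 := by rw [he, sub_self, map_zero]
  by_cases hdvd : n ∣ e
  · rw [h.map_one_sub_pow_of_dvd hdvd he0, v.zero_iff, sub_eq_zero] at hv
    exact h.pow_ne_one hv.symm
  · exact one_ne_zero ((h.map_one_sub_pow_eq_one e hdvd).symm.trans hv)

theorem pow_div_pow_eq_one_iff {a b : ℕ} : q ^ a / q ^ b = 1 ↔ a = b := by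
  rw [div_eq_one_iff_eq (pow_ne_zero b h.ne_zero)]
  refine ⟨fun hab ↦ ?_, fun hab ↦ hab ▸ rfl⟩
  wlog hle : a ≤ b generalizing a b
  · exact (this hab.symm (le_of_not_ge hle)).symm
  obtain ⟨c, rfl⟩ := Nat.exists_eq_add_of_le hle
  rw [pow_add, left_eq_mul₀ (pow_ne_zero a h.ne_zero), h.pow_eq_one_iff] at hab
  omega

theorem map_qPochhammer_self {e s : ℕ} (he : e ≠ 0) (hs : s.Coprime n) :
    v (qPochhammer (q ^ e) (q ^ s) n) = v (1 - q ^ n) := by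
  have : NeZero n := ⟨h.pos.ne'⟩
  have hdvd (i : ℕ) : n ∣ e + s * i ↔ (i : ZMod n) = -e * (s : ZMod n)⁻¹ := by
    have hinv := ZMod.coe_mul_inv_eq_one s hs
    rw [← ZMod.natCast_eq_zero_iff]
    push_cast
    grind
  set i₀ := (-e * (s : ZMod n)⁻¹ : ZMod n).val with hi₀
  have hdvd₀ : n ∣ e + s * i₀ := (hdvd i₀).2 (ZMod.natCast_zmod_val _)
  simp only [qPochhammer, ← pow_mul, ← pow_add, map_prod]
  rw [prod_eq_single_of_mem i₀ (mem_range.2 (ZMod.val_lt _)),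
    h.map_one_sub_pow_of_dvd hdvd₀ (by omega)]
  refine fun i hi hne ↦ h.map_one_sub_pow_eq_one _ fun hi' ↦ hne ?_
  rw [hi₀, ← (hdvd i).1 hi', ZMod.val_cast_of_lt (mem_range.1 hi)]

theorem map_qPochhammer_mul {e s : ℕ} (he : e ≠ 0) (hs : s.Coprime n) (l : ℕ) :
    v (qPochhammer (q ^ e) (q ^ s) (l * n)) = v (1 - q ^ n) ^ l := by
  induction l with
  | zero => simp
  | succ l ih =>
    rw [add_mul, one_mul, qPochhammer_add, map_mul, ih, ← pow_mul, ← pow_add,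
      h.map_qPochhammer_self (by omega) hs, pow_succ]

theorem map_one_add_eq_one (hn : 2 < n) : v (1 + q) = 1 := by
  have h1 := h.map_one_sub_pow_eq_one 1 (Nat.not_dvd_of_pos_of_lt one_pos (by omega))
  have h2 := h.map_one_sub_pow_eq_one 2 (Nat.not_dvd_of_pos_of_lt two_pos hn)
  rw [pow_one] at h1
  rwa [← one_pow 2, sq_sub_sq, map_mul, h1, mul_one] at h2

theorem map_qPochhammer_eq_one {x : K} {e s k : ℕ} (hx : v (1 - x) < 1)
    (hdvd : ∀ i < k, ¬ n ∣ e + s * i) : v (qPochhammer (x * q ^ e) (q ^ s) k) = 1 := by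
  refine valuation_qPochhammer_eq_one fun i hi ↦ ?_
  rw [mul_assoc, ← pow_mul, ← pow_add]
  exact valuation_one_sub_mul_eq_one hx (h.map_pow_eq_one _).le
    (h.map_one_sub_pow_eq_one _ (hdvd i hi))

theorem map_qPochhammer_base_eq_one {x : K} {s k : ℕ} (hx : v (1 - x) < 1) (hs : s.Coprime n)
    (hk : k < n) : v (qPochhammer (x * q ^ s) (q ^ s) k) = 1 := by
  refine h.map_qPochhammer_eq_one hx fun i hi hdvd ↦ ?_
  rw [add_comm, ← Nat.mul_add_one] at hdvd
  have := Nat.le_of_dvd i.succ_pos (hs.symm.dvd_of_dvd_mul_left hdvd)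
  omega

end IsResiduePrimitiveRoot

section Block

theorem coprime_four_of_mod_four_eq_three {n : ℕ} (hn : n % 4 = 3) : Nat.Coprime 4 n := by
  rw [Nat.Coprime, Nat.gcd_rec, hn]
  rfl

variable {K : Type*} [Field K]

/-- The `k`-th term `(1 + x q⁴ᵏ⁺¹) (x q²; q⁴)ₖ³ / (x q⁴; q⁴)ₖ³ qᵏ` of the series of the theorem, up
to its constant denominator `1 + q`, with the summation started at `x = q⁴ᴹ` instead of `x = 1`. -/
def blockTerm (q x : K) (k : ℕ) : K :=
  (1 + x * q ^ (4 * k + 1)) *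
    (qPochhammer (x * q ^ 2) (q ^ 4) k ^ 3 / qPochhammer (x * q ^ 4) (q ^ 4) k ^ 3) * q ^ k

theorem blockTerm_add (q x : K) (k l : ℕ) :
    blockTerm q x (k + l) =
      (qPochhammer (x * q ^ 2) (q ^ 4) k / qPochhammer (x * q ^ 4) (q ^ 4) k) ^ 3 * q ^ k *
        blockTerm q (x * q ^ (4 * k)) l := by
  have hshift (e : ℕ) : x * q ^ e * (q ^ 4) ^ k = x * q ^ (4 * k) * q ^ e := by ring
  rw [blockTerm, blockTerm, qPochhammer_add, qPochhammer_add, hshift, hshift]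
  ring

theorem qDixonTerm_block {q x z : K} (hq : q ≠ 0) (hx : x ≠ 0) (hz : z ≠ 0) (k : ℕ) :
    qDixonTerm (q ^ 4) (q ^ 2 / z) (x * z * q ^ 2) (x * q) k =
      qPochhammer (x * q ^ 2 * x) (q ^ 4) k * qPochhammer (x * q ^ 2 / (x * z)) (q ^ 4) k *
          qPochhammer (x * q ^ 2 * z) (q ^ 4) k /
        (qPochhammer (x * q ^ 4 * x⁻¹) (q ^ 4) k *
          qPochhammer (x * q ^ 4 / (x⁻¹ * z⁻¹)) (q ^ 4) k *
          qPochhammer (x * q ^ 4 * z⁻¹) (q ^ 4) k) * q ^ k := by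
  have hb : q ^ 2 / z = x * q ^ 2 / (x * z) := by field_simp
  have hden : q ^ 4 = x * q ^ 4 * x⁻¹ := by field_simp
  have hdenb : (x * q) ^ 2 * q ^ 4 / (q ^ 2 / z) = x * q ^ 4 / (x⁻¹ * z⁻¹) := by field_simp
  have hdenc : (x * q) ^ 2 * q ^ 4 / (x * z * q ^ 2) = x * q ^ 4 * z⁻¹ := by field_simp
  have hpow : x * q * q ^ 4 / (q ^ 2 / z * (x * z * q ^ 2)) = q := by field_simp
  rw [qDixonTerm, hdenb, hdenc, hpow, ← hden, hb]
  ring_nf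

variable {Γ : Type*} [LinearOrderedCommGroupWithZero Γ] {v : Valuation K Γ} {q : K} {n : ℕ}
  (h : IsResiduePrimitiveRoot v q n)

include h

theorem valuation_blockTerm_sub_le (hn : Nat.Coprime 4 n) {x z : K}
    (hx : v (1 - x) ≤ v (1 - q ^ n)) (hz : v (1 - z) ≤ v (1 - q ^ n)) {k : ℕ} (hk : k < n) :
    v (blockTerm q x k -
      (1 + x * q * (q ^ 4) ^ k) * qDixonTerm (q ^ 4) (q ^ 2 / z) (x * z * q ^ 2) (x * q) k) ≤
      v (1 - q ^ n) ^ 2 := by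
  have hδ := h.map_one_sub_pow_lt_one
  have hvx := valuation_eq_one_of_one_sub_lt_one (hx.trans_lt hδ)
  have hvz := valuation_eq_one_of_one_sub_lt_one (hz.trans_lt hδ)
  have hvmul {a : K} (ha : v a = 1) (e : ℕ) : v (a * q ^ e) = 1 := by
    rw [map_mul, ha, h.map_pow_eq_one, one_mul]
  have hinv {a : K} (hva : v a = 1) (ha : v (1 - a) ≤ v (1 - q ^ n)) :
      v (1 - a⁻¹) ≤ v (1 - q ^ n) := by
    rw [← one_div]
    exact valuation_one_sub_div_le hva (by simp) ha
  have hnum := valuation_qPochhammer_mul_sub_pow_le (hvmul hvx 2) (h.map_pow_eq_one 4) hvx hvz hx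
    hz k
  have hden := valuation_qPochhammer_mul_sub_pow_le (hvmul hvx 4) (h.map_pow_eq_one 4)
    (by simp [hvx]) (by simp [hvz]) (hinv hvx hx) (hinv hvz hz) k
  have hden1 := h.map_qPochhammer_base_eq_one (hx.trans_lt hδ) hn hk
  have hquot := valuation_div_sub_div_le (pow_lt_one₀ zero_le hδ two_ne_zero)
    (by
      rw [map_pow]
      exact pow_le_one' (valuation_qPochhammer_le_one (hvmul hvx 2).le (h.map_pow_eq_one 4).le k) 3)
    (by rw [map_pow, hden1, one_pow]) hnum hden
  rw [qDixonTerm_block h.ne_zero (v.ne_zero_iff.1 (hvx ▸ one_ne_zero))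
    (v.ne_zero_iff.1 (hvz ▸ one_ne_zero)), blockTerm, v.map_sub_swap,
    show x * q * (q ^ 4) ^ k = x * q ^ (4 * k + 1) by ring, ← mul_assoc, ← sub_mul, ← mul_sub,
    map_mul, map_mul, h.map_pow_eq_one, mul_one]
  exact (mul_le_of_le_one_left' (v.map_add_le v.map_one.le (hvmul hvx _).le)).trans hquot

theorem sum_qDixonTerm_block {L t : ℕ} (hn : n = 4 * t + 3) (hL : 4 ∣ L) :
    ∑ k ∈ range n, (1 + q ^ L * q * (q ^ 4) ^ k) *
        qDixonTerm (q ^ 4) (q ^ 2 / q ^ (2 * n)) (q ^ L * q ^ (2 * n) * q ^ 2) (q ^ L * q) k =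
      (1 + q ^ L * q) *
        (qPochhammer (q ^ (2 * L + 6)) (q ^ 4) (2 * t + 1) *
            qPochhammer (q ^ 3 / q ^ (2 * n)) (q ^ 4) (2 * t + 1) /
          (qPochhammer (q ^ L * q ^ 5) (q ^ 4) (2 * t + 1) *
            qPochhammer (q ^ L / q ^ (2 * n) * q ^ 4) (q ^ 4) (2 * t + 1))) := by
  have hq (e : ℕ) : q ^ e ≠ 0 := pow_ne_zero e h.ne_zero
  have hb : q ^ 2 / q ^ (2 * n) = ((q ^ 4) ^ (2 * t + 1))⁻¹ := by
    rw [div_eq_iff (hq _), ← pow_mul, eq_inv_mul_iff_mul_eq₀ (hq _), ← pow_add, hn]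
    ring_nf
  have hc : q ^ L * q ^ (2 * n) * q ^ 2 = q ^ (L + 2 * n + 2) := by ring
  have hdc (j : ℕ) : (q ^ L * q) ^ 2 * (q ^ 4) ^ (j + 1) / q ^ (L + 2 * n + 2) =
      q ^ (L + 4 * j + 4) / q ^ (2 * n) := by
    rw [div_eq_div_iff (hq _) (hq _)]
    ring
  rw [hb, hc, sum_qDixonTerm_inv_pow (hq 4) (hq _)]
  · have hnum : (q ^ L * q) ^ 2 * q ^ 4 = q ^ (2 * L + 6) := by ring
    have hnum' : q ^ L * q ^ 5 / q ^ (L + 2 * n + 2) = q ^ 3 / q ^ (2 * n) := by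
      rw [div_eq_div_iff (hq _) (hq _)]
      ring
    have hden : q ^ L * q * q ^ 4 = q ^ L * q ^ 5 := by ring
    have hden' : q ^ (2 * L + 6) / q ^ (L + 2 * n + 2) = q ^ L / q ^ (2 * n) * q ^ 4 := by
      rw [div_mul_eq_mul_div, div_eq_div_iff (hq _) (hq _)]
      ring
    rw [hnum, hden, hnum', hden']
  · intro j
    rw [← pow_mul, Ne, h.pow_eq_one_iff]
    omega
  · intro j
    rw [show (q ^ L * q) ^ 2 * (q ^ 4) ^ (j + 1) = q ^ (2 * L + 4 * j + 6) by ring, Ne,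
      h.pow_eq_one_iff]
    omega
  · intro j
    rw [hdc, Ne, h.pow_div_pow_eq_one_iff]
    omega
  · omega

theorem valuation_sum_qDixonTerm_block_le (hn : n % 4 = 3) {L : ℕ} (hL : 4 ∣ L) (hLn : n ∣ L) :
    v (∑ k ∈ range n, (1 + q ^ L * q * (q ^ 4) ^ k) *
      qDixonTerm (q ^ 4) (q ^ 2 / q ^ (2 * n)) (q ^ L * q ^ (2 * n) * q ^ 2) (q ^ L * q) k) ≤
      v (1 - q ^ n) ^ 2 := by
  obtain ⟨t, rfl⟩ : ∃ t, n = 4 * t + 3 := ⟨n / 4, by omega⟩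
  have hδ := h.map_one_sub_pow_lt_one
  have hvq := h.map_pow_eq_one
  have hL1 := h.map_one_sub_pow_le hLn
  have h2n := h.map_one_sub_pow_le (dvd_mul_left (4 * t + 3) 2)
  have hnum : v (qPochhammer (q ^ (2 * L + 6)) (q ^ 4) (2 * t + 1)) ≤ v (1 - q ^ (4 * t + 3)) :=
    valuation_qPochhammer_le (hvq _).le (hvq 4).le (i := 2 * t) (by omega) <| by
      rw [← pow_mul, ← pow_add]
      refine h.map_one_sub_pow_le ?_
      rw [show 2 * L + 6 + 4 * (2 * t) = 2 * L + 2 * (4 * t + 3) by ring]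
      exact dvd_add (hLn.mul_left 2) (dvd_mul_left _ 2)
  have hnum' : v (qPochhammer (q ^ 3 / q ^ (2 * (4 * t + 3))) (q ^ 4) (2 * t + 1)) ≤
      v (1 - q ^ (4 * t + 3)) :=
    valuation_qPochhammer_le (by rw [map_div₀, hvq, hvq, div_one]) (hvq 4).le (i := t)
      (by omega) <| by
      rw [div_mul_eq_mul_div, ← pow_mul, ← pow_add, add_comm 3]
      exact valuation_one_sub_div_le (hvq _) le_rfl h2n
  have hden : v (qPochhammer (q ^ L * q ^ 5) (q ^ 4) (2 * t + 1)) = 1 :=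
    h.map_qPochhammer_eq_one (hL1.trans_lt hδ) fun i hi hdvd ↦ by
      have := Nat.eq_of_dvd_of_lt_two_mul (by omega) hdvd (by omega)
      omega
  have hden' : v (qPochhammer (q ^ L / q ^ (2 * (4 * t + 3)) * q ^ 4) (q ^ 4) (2 * t + 1)) = 1 :=
    h.map_qPochhammer_base_eq_one ((valuation_one_sub_div_le (hvq _) hL1 h2n).trans_lt hδ)
      (coprime_four_of_mod_four_eq_three hn) (by omega)
  rw [sum_qDixonTerm_block h rfl hL, map_mul, map_div₀, map_mul, map_mul _ (qPochhammer _ _ _),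
    hden, hden', mul_one, div_one, sq]
  refine (mul_le_of_le_one_left' ?_).trans (mul_le_mul' hnum hnum')
  rw [← pow_succ]
  exact v.map_add_le v.map_one.le (hvq _).le

theorem valuation_sum_blockTerm_le (hn : n % 4 = 3) {L : ℕ} (hL : 4 ∣ L) (hLn : n ∣ L) :
    v (∑ k ∈ range n, blockTerm q (q ^ L) k) ≤ v (1 - q ^ n) ^ 2 := by
  have hcop := coprime_four_of_mod_four_eq_three hn
  rw [← sub_add_cancel (∑ k ∈ range n, blockTerm q (q ^ L) k), ← sum_sub_distrib]
  refine v.map_add_le (v.map_sum_le fun k hk ↦ ?_) (valuation_sum_qDixonTerm_block_le h hn hL hLn)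
  exact valuation_blockTerm_sub_le h hcop (h.map_one_sub_pow_le hLn)
    (h.map_one_sub_pow_le (dvd_mul_left n 2)) (mem_range.1 hk)

theorem valuation_sum_blockTerm_one_le (hn : n % 4 = 3) (m : ℕ) :
    v (∑ k ∈ range (m * n), blockTerm q 1 k) ≤ v (1 - q ^ n) ^ 2 := by
  have hcop := coprime_four_of_mod_four_eq_three hn
  have hδ : v (1 - q ^ n) ≠ 0 := v.ne_zero_iff.2 (sub_ne_zero.2 h.pow_ne_one.symm)
  have hratio (l : ℕ) :
      v (qPochhammer (q ^ 2) (q ^ 4) (l * n) / qPochhammer (q ^ 4) (q ^ 4) (l * n)) = 1 := by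
    rw [map_div₀, h.map_qPochhammer_mul two_ne_zero hcop, h.map_qPochhammer_mul four_ne_zero hcop,
      div_self (pow_ne_zero l hδ)]
  induction m with
  | zero => simp
  | succ l ih =>
    rw [add_mul, one_mul, sum_range_add]
    refine v.map_add_le ih ?_
    simp only [blockTerm_add, one_mul]
    rw [← mul_sum, map_mul, map_mul, map_pow, hratio, h.map_pow_eq_one, one_pow, one_mul, one_mul]
    exact valuation_sum_blockTerm_le h hn (dvd_mul_right 4 _) ((dvd_mul_left n l).mul_left 4)

end Block

section RatFunc

open IsDedekindDomain

theorem exists_mul_algebraMap_eq_of_valuation_le {R K : Type*} [CommRing R] [IsDedekindDomain R]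
    [Field K] [Algebra R K] [IsFractionRing R K] (w : HeightOneSpectrum R) {ϖ : R} (hϖ : ϖ ≠ 0)
    {f : K} {k : ℕ} (hf : w.valuation K f ≤ w.valuation K (algebraMap R K ϖ) ^ k) :
    ∃ a, ∃ b ∉ w.asIdeal, f * algebraMap R K b = algebraMap R K (ϖ ^ k * a) := by
  have hϖ' : algebraMap R K ϖ ^ k ≠ 0 :=
    pow_ne_zero k ((map_ne_zero_iff _ (IsFractionRing.injective R K)).2 hϖ)
  have hint : w.valuation K (f / algebraMap R K ϖ ^ k) ≤ 1 := by
    rw [map_div₀, map_pow]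
    exact div_le_one_of_le₀ hf zero_le
  obtain ⟨a, b, hab⟩ := HeightOneSpectrum.exists_primeCompl_mul_eq_of_integer w _ hint
  refine ⟨a, b, b.2, ?_⟩
  rwa [div_mul_eq_mul_div, div_eq_iff hϖ', mul_comm (algebraMap R K a), ← map_pow,
    ← map_mul] at hab

theorem cyclotomic_dvd_iff_aeval_eq_zero {n : ℕ} {μ : ℂ} (hμ : IsPrimitiveRoot μ n) (hn : 0 < n)
    (f : ℚ[X]) : cyclotomic n ℚ ∣ f ↔ aeval μ f = 0 := by
  rw [cyclotomic_eq_minpoly_rat hμ hn, minpoly.dvd_iff]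

/-- The `Φₙ(q)`-adic place of `ℚ(q)`, for `n > 0`. -/
noncomputable def cyclotomicPlace {n : ℕ} (hn : 0 < n) : HeightOneSpectrum ℚ[X] :=
  .ofPrime (Ideal.prime_span_singleton_iff.2 (cyclotomic.irreducible_rat hn).prime)

variable {n : ℕ} (hn : 0 < n)

theorem mem_cyclotomicPlace {f : ℚ[X]} :
    f ∈ (cyclotomicPlace hn).asIdeal ↔ cyclotomic n ℚ ∣ f :=
  Ideal.mem_span_singleton

theorem one_sub_Q_pow (e : ℕ) : 1 - Q ^ e = algebraMap ℚ[X] (RatFunc ℚ) (1 - X ^ e) := by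
  rw [map_sub, map_one, map_pow, RatFunc.algebraMap_X, Q]

theorem isResiduePrimitiveRoot_Q :
    IsResiduePrimitiveRoot ((cyclotomicPlace hn).valuation (RatFunc ℚ)) Q n := by
  have hμ := Complex.isPrimitiveRoot_exp n hn.ne'
  have hdvd (f : ℚ[X]) := cyclotomic_dvd_iff_aeval_eq_zero hμ hn f
  refine ⟨fun j hj ↦ ?_, fun hQn ↦ ?_, ?_, fun e he ↦ ?_⟩
  · rw [← map_natCast (algebraMap ℚ[X] (RatFunc ℚ)),
      HeightOneSpectrum.valuation_eq_one_iff_notMem, mem_cyclotomicPlace, hdvd, map_natCast]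
    exact_mod_cast hj
  · rw [eq_comm, ← sub_eq_zero, one_sub_Q_pow, map_eq_zero_iff _ (IsFractionRing.injective _ _),
      sub_eq_zero, eq_comm, ← C_1] at hQn
    exact X_pow_sub_C_ne_zero hn (1 : ℚ) (sub_eq_zero.2 hQn)
  · rw [one_sub_Q_pow, HeightOneSpectrum.valuation_lt_one_iff_mem, mem_cyclotomicPlace, hdvd]
    simp [hμ.pow_eq_one]
  · rw [one_sub_Q_pow, HeightOneSpectrum.valuation_eq_one_iff_notMem, mem_cyclotomicPlace, hdvd,
      map_sub, map_one, map_pow, aeval_X, sub_eq_zero, eq_comm, hμ.pow_eq_one_iff_dvd]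
    exact he

theorem valuation_one_sub_Q_pow_le :
    (cyclotomicPlace hn).valuation (RatFunc ℚ) (1 - Q ^ n) ≤
      (cyclotomicPlace hn).valuation (RatFunc ℚ) (algebraMap _ _ (cyclotomic n ℚ)) := by
  obtain ⟨g, hg⟩ : cyclotomic n ℚ ∣ 1 - X ^ n :=
    dvd_sub_comm.1 (cyclotomic.dvd_X_pow_sub_one n ℚ)
  rw [one_sub_Q_pow, hg, map_mul, map_mul]
  exact mul_le_of_le_one_right' (HeightOneSpectrum.valuation_le_one _ _)

theorem qPoch_eq_qPochhammer (a b : RatFunc ℚ) (k : ℕ) : qPoch a b k = qPochhammer a b k := rfl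

theorem blockTerm_one_div (k : ℕ) :
    blockTerm Q 1 k / (1 + Q) =
      (1 + Q ^ (4 * k + 1)) * qPoch (Q ^ 2) (Q ^ 4) k ^ 3 * Q ^ k /
        ((1 + Q) * qPoch (Q ^ 4) (Q ^ 4) k ^ 3) := by
  simp only [blockTerm, one_mul, qPoch_eq_qPochhammer]
  rw [mul_comm (1 + Q), ← div_div, ← mul_div_assoc, div_mul_eq_mul_div]

end RatFunc

/-- For positive integers `m, n` with `n ≡ 3 (mod 4)`,
`∑_{k=0}^{mn-1} (1+q^{4k+1})(q^2;q^4)_k^3 q^k / ((1+q)(q^4;q^4)_k^3) ≡ 0 (mod Φ_n(q)^2)`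
in the localization of `ℚ[q]` at `Φ_n(q)`. -/
theorem stmt3 (m n : ℕ) (hm : 0 < m) (hn : 0 < n) (h : n % 4 = 3) :
    ∃ a b : Polynomial ℚ, ¬ (Polynomial.cyclotomic n ℚ ∣ b) ∧
      (∑ k ∈ Finset.range (m * n),
          (1 + Q ^ (4 * k + 1)) * qPoch (Q ^ 2) (Q ^ 4) k ^ 3 * Q ^ k /
            ((1 + Q) * qPoch (Q ^ 4) (Q ^ 4) k ^ 3))
        * algebraMap (Polynomial ℚ) (RatFunc ℚ) b
      = algebraMap (Polynomial ℚ) (RatFunc ℚ) (Polynomial.cyclotomic n ℚ ^ 2 * a) := by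
  have hroot := isResiduePrimitiveRoot_Q hn
  have hle : (cyclotomicPlace hn).valuation (RatFunc ℚ)
      ((∑ k ∈ range (m * n), blockTerm Q 1 k) / (1 + Q)) ≤
        (cyclotomicPlace hn).valuation (RatFunc ℚ) (algebraMap _ _ (cyclotomic n ℚ)) ^ 2 := by
    rw [map_div₀, hroot.map_one_add_eq_one (by omega), div_one]
    exact (valuation_sum_blockTerm_one_le hroot h m).trans
      (pow_le_pow_left' (valuation_one_sub_Q_pow_le hn) 2)
  simp only [← blockTerm_one_div, ← sum_div]
  obtain ⟨a, b, hb, hab⟩ :=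
    exists_mul_algebraMap_eq_of_valuation_le _ (cyclotomic_ne_zero n ℚ) hle
  exact ⟨a, b, (mem_cyclotomicPlace hn).not.1 hb, hab⟩
end
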